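/- Let (U_n) be a nested sequence of measurable subsets of Ω with μ(U_n) > 0 for all n and μ(U_n) → 0. Assume that for all sufficiently large integers L the limits α̂_ℓ(L) = lim_{n→∞} μ_{U_n}(τ_{U_n}^{ℓ-1} ≤ L) exist for every ℓ ≥ 1, set α̂_ℓ = lim_{L→∞} α̂_ℓ(L), assume Σ_{ℓ=1}^∞ ℓ·α̂_ℓ < ∞, put α_ℓ = α̂_ℓ − α̂_{ℓ+1}, and assume α_1 = 1 − α̂_2 > 0. For a measurable set U define Z^L_U(x) = Σ_{i=0}^{2L} 1_U(T^i x) and λ_k(L,U) = μ(Z^L_U = k)/μ(Z^L_U > 0). Then for every k ≥ 1 the double limit λ_k = lim_{L→∞} lim_{n→∞} λ_k(L, U_n) exists and λ_k = (α_k − α_{k+1})/α_1. -/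

import Mathlib

open MeasureTheory Filter Topology
open scoped Classical ENNReal

/-- Number of visits of the orbit of `x` to `U` at times `1, …, j`. -/
noncomputable def visits {Ω : Type*} (T : Ω → Ω) (U : Set Ω) (x : Ω) (j : ℕ) : ℕ :=
  ((Finset.Icc 1 j).filter fun i => T^[i] x ∈ U).card

/-- The `ℓ`-th return time to `U` (with value `∞` if undefined, and `τ^0 = 0`). -/
noncomputable def tauIter {Ω : Type*} (T : Ω → Ω) (U : Set Ω) (ℓ : ℕ) (x : Ω) : ℕ∞ :=
  sInf ((fun j : ℕ => (j : ℕ∞)) '' {j : ℕ | ℓ ≤ visits T U x j})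

/-- The conditional probability `μ_U(A) = μ(A ∩ U)/μ(U)` as a real number. -/
noncomputable def condProb {Ω : Type*} [MeasurableSpace Ω] (μ : Measure Ω)
    (U A : Set Ω) : ℝ :=
  (μ (A ∩ U)).toReal / (μ U).toReal

/-- `Z^L_U(x) = Σ_{i=0}^{2L} 1_U(T^i x)`, the number of visits to `U` during `[0, 2L]`. -/
noncomputable def Zcnt {Ω : Type*} (T : Ω → Ω) (U : Set Ω) (L : ℕ) (x : Ω) : ℕ :=
  ((Finset.range (2 * L + 1)).filter fun i => T^[i] x ∈ U).card

/-- `λ_k(L,U) = μ(Z^L_U = k) / μ(Z^L_U > 0)`. -/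
noncomputable def lam {Ω : Type*} [MeasurableSpace Ω] (μ : Measure Ω)
    (T : Ω → Ω) (U : Set Ω) (k L : ℕ) : ℝ :=
  (μ {x | Zcnt T U L x = k}).toReal / (μ {x | 0 < Zcnt T U L x}).toReal

/-!
Split the event that the window `[0, N)` contains more than `m` visits to `U` according to the
time of the `(m + 1)`-st visit counted backwards from the end of the window. By invariance of `μ`,
the part where this visit is followed by `j` further times of the window has measure
`μ(U) μ_U(exactly m returns by time j)`, so `μ(more than m visits) / (N μ(U))` is the Cesàro mean
over `j < N` of the differences `μ_U(τ^m ≤ j) - μ_U(τ^{m+1} ≤ j)`. In the double limit the mean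
inherits the limit `α_{m+1} = α̂_{m+1} - α̂_{m+2}`, and `λ_k` is a ratio of differences of such
normalized measures.
-/

section Curry

variable {α β γ δ X : Type*}

lemma tendsto_prodMap_curry {f : α → γ} {g : β → δ} {la : Filter α} {lb : Filter β}
    {lc : Filter γ} {ld : Filter δ} (hf : Tendsto f la lc) (hg : Tendsto g lb ld) :
    Tendsto (Prod.map f g) (la.curry lb) (lc.curry ld) :=
  fun _ hs => (hf.eventually (mem_curry_iff.1 hs)).mono fun _ h => hg.eventually h

lemma tendsto_curry_of_tendsto_nhds [TopologicalSpace X] {f : α → β → X} {g : α → X} {x : X}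
    {la : Filter α} {lb : Filter β} (hf : ∀ᶠ a in la, Tendsto (f a) lb (𝓝 (g a)))
    (hg : Tendsto g la (𝓝 x)) :
    Tendsto (fun p : α × β => f p.1 p.2) (la.curry lb) (𝓝 x) := by
  refine tendsto_nhds.2 fun s hs hx => mem_curry_iff.2 ?_
  filter_upwards [hf, hg.eventually (hs.mem_nhds hx)] with a ha hga
  exact ha.eventually (hs.mem_nhds hga)

lemma tendsto_curry_atTop_iff_dist_le [SemilatticeSup α] [Nonempty α] [SemilatticeSup β]
    [Nonempty β] [PseudoMetricSpace X] {f : α × β → X} {x : X} :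
    Tendsto f (atTop.curry atTop) (𝓝 x) ↔
      ∀ ε > (0 : ℝ), ∃ a₀, ∀ a ≥ a₀, ∃ b₀, ∀ b ≥ b₀, dist (f (a, b)) x ≤ ε := by
  simp only [Metric.nhds_basis_closedBall.tendsto_right_iff, eventually_curry_iff,
    eventually_atTop, Metric.mem_closedBall]

lemma tendsto_curry_cesaro_smul {E : Type*} [NormedAddCommGroup E] [NormedSpace ℝ E]
    {l : Filter β} {q : ℕ → β → E} {x : E}
    (hbdd : ∀ j, l.IsBoundedUnder (· ≤ ·) fun b => ‖q j b‖)
    (hq : Tendsto (fun p : ℕ × β => q p.1 p.2) (atTop.curry l) (𝓝 x)) :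
    Tendsto (fun p : ℕ × β => (p.1 : ℝ)⁻¹ • ∑ j ∈ Finset.range p.1, q j p.2)
      (atTop.curry l) (𝓝 x) := by
  refine Metric.tendsto_nhds.2 fun ε hε => ?_
  choose C hC using hbdd
  -- Eventual bounds for `‖q j b - x‖`, equal to `ε / 2` for all large `j`, reduce the claim to
  -- the Cesàro theorem for a single sequence.
  let e : ℕ → ℝ := fun j => if ∀ᶠ b in l, ‖q j b - x‖ ≤ ε / 2 then ε / 2 else C j + ‖x‖
  have norm_le_e : ∀ j, ∀ᶠ b in l, ‖q j b - x‖ ≤ e j := by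
    intro j
    by_cases hj : ∀ᶠ b in l, ‖q j b - x‖ ≤ ε / 2
    · simpa only [e, if_pos hj] using hj
    · simp only [e, if_neg hj]
      filter_upwards [eventually_map.1 (hC j)] with b hb
      exact (norm_sub_le _ _).trans (by gcongr)
  have tendsto_e : Tendsto e atTop (𝓝 (ε / 2)) := by
    refine tendsto_const_nhds.congr' ?_
    filter_upwards [eventually_curry_iff.1 (Metric.tendsto_nhds.1 hq (ε / 2) (half_pos hε))]
      with j hj
    exact (if_pos (hj.mono fun b hb => (dist_eq_norm (q j b) x ▸ hb).le)).symm
  rw [eventually_curry_iff]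
  filter_upwards [tendsto_e.cesaro.eventually_lt_const (half_lt_self hε),
    eventually_gt_atTop 0] with N hN hN0
  filter_upwards [(Finset.range N).eventually_all.2 fun j _ => norm_le_e j] with b hb
  have hN' : (N : ℝ) ≠ 0 := by positivity
  calc dist ((N : ℝ)⁻¹ • ∑ j ∈ Finset.range N, q j b) x
      = ‖(N : ℝ)⁻¹ • ∑ j ∈ Finset.range N, (q j b - x)‖ := by
        rw [dist_eq_norm, Finset.sum_sub_distrib, Finset.sum_const, Finset.card_range, smul_sub,
          ← Nat.cast_smul_eq_nsmul ℝ, inv_smul_smul₀ hN']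
    _ ≤ (N : ℝ)⁻¹ * ∑ j ∈ Finset.range N, e j := by
        rw [norm_smul, Real.norm_of_nonneg (by positivity)]
        gcongr
        exact norm_sum_le_of_le _ hb
    _ < ε := hN

end Curry

section Visits

variable {Ω : Type*} (T : Ω → Ω) (U : Set Ω)

/-- The number of visits of the orbit of `x` to `U` at times `0, …, N - 1`. It extends `Zcnt` to
windows of arbitrary length, so that one can induct on the length. -/
noncomputable def visitCount (N : ℕ) (x : Ω) : ℕ :=
  birkhoffSum T (U.indicator 1) N x

lemma visitCount_eq_card (N : ℕ) (x : Ω) :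
    visitCount T U N x = ((Finset.range N).filter fun i => T^[i] x ∈ U).card := by
  simp only [visitCount, birkhoffSum, Set.indicator_apply, Pi.one_apply, Finset.card_filter]

lemma Zcnt_eq_visitCount (L : ℕ) (x : Ω) : Zcnt T U L x = visitCount T U (2 * L + 1) x :=
  (visitCount_eq_card T U _ x).symm

lemma visits_eq_visitCount (x : Ω) (j : ℕ) : visits T U x j = visitCount T U j (T x) := by
  rw [visits, visitCount_eq_card, Finset.card_filter, Finset.card_filter,
    ← Finset.Ico_add_one_right_eq_Icc, Finset.sum_Ico_eq_sum_range]
  simp only [add_comm 1, Function.iterate_succ_apply, Nat.add_sub_cancel]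

lemma visitCount_succ (N : ℕ) (x : Ω) :
    visitCount T U (N + 1) x = U.indicator 1 x + visits T U x N := by
  rw [visits_eq_visitCount, visitCount, birkhoffSum_succ', visitCount]

lemma visits_mono (x : Ω) : Monotone (visits T U x) := fun _ _ h =>
  Finset.card_le_card (Finset.filter_subset_filter _ (Finset.Icc_subset_Icc_right h))

lemma tauIter_le_iff (ℓ L : ℕ) (x : Ω) :
    tauIter T U ℓ x ≤ (L : ℕ∞) ↔ ℓ ≤ visits T U x L := by
  refine ⟨fun h => ?_, fun h => sInf_le ⟨L, h, rfl⟩⟩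
  obtain ⟨_, ⟨j, hj, rfl⟩, hjL⟩ :=
    sInf_lt_iff.1 (h.trans_lt (Nat.cast_lt.2 L.lt_succ_self))
  exact hj.trans (visits_mono T U x (Nat.lt_succ_iff.1 (Nat.cast_lt.1 hjL)))

variable {T U} [MeasurableSpace Ω]

lemma measurable_visitCount (hT : Measurable T) (hU : MeasurableSet U) (N : ℕ) :
    Measurable (visitCount T U N) :=
  Finset.measurable_sum (Finset.range N) fun i _ =>
    (measurable_one.indicator hU).comp (hT.iterate i)

lemma measurable_visits (hT : Measurable T) (hU : MeasurableSet U) (j : ℕ) :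
    Measurable fun x => visits T U x j := by
  simp only [visits_eq_visitCount]
  exact (measurable_visitCount hT hU j).comp hT

end Visits

section Invariant

variable {Ω : Type*} [MeasurableSpace Ω] {μ : Measure Ω} {T : Ω → Ω} {U : Set Ω}

lemma condProb_eq_cond (hU : MeasurableSet U) (A : Set Ω) :
    condProb μ U A = (ProbabilityTheory.cond μ U).real A := by
  rw [condProb, measureReal_def, ProbabilityTheory.cond_apply hU, ENNReal.toReal_mul,
    ENNReal.toReal_inv, inv_mul_eq_div, Set.inter_comm]

lemma norm_condProb_le_one (hU : MeasurableSet U) (A : Set Ω) : ‖condProb μ U A‖ ≤ 1 := by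
  rw [condProb_eq_cond hU, Real.norm_of_nonneg measureReal_nonneg]
  exact measureReal_le_one

lemma condProb_visits_eq (hT : Measurable T) (hU : MeasurableSet U) (m j : ℕ) :
    condProb μ U {x | visits T U x j = m} =
      condProb μ U {x | tauIter T U m x ≤ (j : ℕ∞)} -
        condProb μ U {x | tauIter T U (m + 1) x ≤ (j : ℕ∞)} := by
  have eq_sdiff : {x | visits T U x j = m} =
      {x | m ≤ visits T U x j} \ {x | m + 1 ≤ visits T U x j} := by
    ext x
    simp only [Set.mem_ofPred_eq, Set.mem_sdiff]
    omega
  simp only [tauIter_le_iff, condProb_eq_cond hU]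
  rw [eq_sdiff, measureReal_sdiff (Set.ofPred_subset_ofPred.2 fun x hx => (Nat.le_succ m).trans hx)
    (measurableSet_le measurable_const (measurable_visits hT hU j))]

lemma measure_lt_visitCount (hT : MeasurePreserving T μ μ) (hU : MeasurableSet U) (m N : ℕ) :
    μ {x | m < visitCount T U N x} =
      ∑ j ∈ Finset.range N, μ ({x | visits T U x j = m} ∩ U) := by
  induction N with
  | zero => simp [visitCount]
  | succ N ih =>
    have visits_measurable := measurable_visits hT.measurable hU N
    have split_at_zero : {x | m < visitCount T U (N + 1) x} =
        T ⁻¹' {x | m < visitCount T U N x} ∪ {x | visits T U x N = m} ∩ U := by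
      ext x
      simp only [Set.mem_ofPred_eq, Set.mem_union, Set.mem_preimage, Set.mem_inter_iff,
        visitCount_succ, ← visits_eq_visitCount, Set.indicator_apply, Pi.one_apply]
      grind
    have disjoint_parts : Disjoint (T ⁻¹' {x | m < visitCount T U N x})
        ({x | visits T U x N = m} ∩ U) := by
      refine Set.disjoint_left.2 fun x (hx : m < visitCount T U N (T x)) hx' => hx.ne' ?_
      rw [← visits_eq_visitCount]
      exact hx'.1
    rw [Finset.sum_range_succ, ← ih, split_at_zero, measure_union disjoint_parts
      ((visits_measurable (measurableSet_singleton m)).inter hU), hT.measure_preimage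
      (measurableSet_lt measurable_const
        (measurable_visitCount hT.measurable hU N)).nullMeasurableSet]

lemma measure_lt_visitCount_ne_top (hT : MeasurePreserving T μ μ) (hU : MeasurableSet U)
    (hfin : μ U ≠ ∞) (m N : ℕ) : μ {x | m < visitCount T U N x} ≠ ∞ := by
  rw [measure_lt_visitCount hT hU]
  exact ENNReal.sum_ne_top.2 fun j _ => measure_ne_top_of_subset Set.inter_subset_right hfin

lemma measureReal_visitCount_eq_succ (hT : MeasurePreserving T μ μ) (hU : MeasurableSet U)
    (hfin : μ U ≠ ∞) (m N : ℕ) :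
    μ.real {x | visitCount T U N x = m + 1} =
      μ.real {x | m < visitCount T U N x} - μ.real {x | m + 1 < visitCount T U N x} := by
  have eq_sdiff : {x | visitCount T U N x = m + 1} =
      {x | m < visitCount T U N x} \ {x | m + 1 < visitCount T U N x} := by
    ext x
    simp only [Set.mem_ofPred_eq, Set.mem_sdiff]
    omega
  rw [eq_sdiff, measureReal_sdiff
    (Set.ofPred_subset_ofPred.2 fun x hx => (Nat.lt_succ_self m).trans hx)
    (measurableSet_lt measurable_const (measurable_visitCount hT.measurable hU N))
    (measure_lt_visitCount_ne_top hT hU hfin m N)]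

/-- The Cesàro mean over `j < N` of the conditional probability, given a start in `U`, of exactly
`m` returns up to time `j`. Its double limit is the paper's `α_{m+1}`. -/
noncomputable def meanReturnProb (μ : Measure Ω) (T : Ω → Ω) (U : Set Ω) (m N : ℕ) : ℝ :=
  (N : ℝ)⁻¹ • ∑ j ∈ Finset.range N, condProb μ U {x | visits T U x j = m}

lemma meanReturnProb_eq_div (hT : MeasurePreserving T μ μ) (hU : MeasurableSet U)
    (hfin : μ U ≠ ∞) (m N : ℕ) :
    meanReturnProb μ T U m N = μ.real {x | m < visitCount T U N x} / (N * μ.real U) := by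
  simp only [meanReturnProb, condProb, smul_eq_mul, ← Finset.sum_div, measureReal_def]
  rw [measure_lt_visitCount hT hU, ENNReal.toReal_sum
    fun j _ => measure_ne_top_of_subset Set.inter_subset_right hfin, inv_mul_eq_div, div_div,
    mul_comm]

lemma lam_succ_eq (hT : MeasurePreserving T μ μ) (hU : MeasurableSet U) (hne : μ U ≠ 0)
    (hfin : μ U ≠ ∞) (m L : ℕ) :
    lam μ T U (m + 1) L =
      (meanReturnProb μ T U m (2 * L + 1) - meanReturnProb μ T U (m + 1) (2 * L + 1)) /
        meanReturnProb μ T U 0 (2 * L + 1) := by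
  have window_ne_zero : ((2 * L + 1 : ℕ) : ℝ) * μ.real U ≠ 0 :=
    mul_ne_zero (Nat.cast_ne_zero.2 (Nat.succ_ne_zero _)) (ENNReal.toReal_ne_zero.2 ⟨hne, hfin⟩)
  simp only [meanReturnProb_eq_div hT hU hfin]
  rw [← sub_div, div_div_div_cancel_right₀ window_ne_zero,
    ← measureReal_visitCount_eq_succ hT hU hfin]
  simp only [lam, Zcnt_eq_visitCount, measureReal_def]

end Invariant

section DoubleLimit

variable {Ω ι : Type*} [MeasurableSpace Ω] {μ : Measure Ω} {T : Ω → Ω} {U : ι → Set Ω}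
  {l : Filter ι}

lemma tendsto_meanReturnProb (hT : Measurable T) (hU : ∀ i, MeasurableSet (U i)) {a b : ℝ}
    {m : ℕ}
    (ha : Tendsto (fun p : ℕ × ι => condProb μ (U p.2) {x | tauIter T (U p.2) m x ≤ (p.1 : ℕ∞)})
      (atTop.curry l) (𝓝 a))
    (hb : Tendsto
      (fun p : ℕ × ι => condProb μ (U p.2) {x | tauIter T (U p.2) (m + 1) x ≤ (p.1 : ℕ∞)})
      (atTop.curry l) (𝓝 b)) :
    Tendsto (fun p : ℕ × ι => meanReturnProb μ T (U p.2) m p.1) (atTop.curry l)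
      (𝓝 (a - b)) := by
  refine tendsto_curry_cesaro_smul
    (q := fun j i => condProb μ (U i) {x | visits T (U i) x j = m})
    (fun j => isBoundedUnder_of ⟨1, fun i => norm_condProb_le_one (hU i) _⟩) ?_
  simpa only [condProb_visits_eq hT (hU _)] using ha.sub hb

theorem stmt3_general (hT : MeasurePreserving T μ μ) (hU : ∀ i, MeasurableSet (U i))
    (hne : ∀ i, μ (U i) ≠ 0) (hfin : ∀ i, μ (U i) ≠ ∞) {hatα : ℕ → ℝ}
    (hlim : ∀ ℓ ≥ 1, Tendsto
      (fun p : ℕ × ι => condProb μ (U p.2) {x | tauIter T (U p.2) (ℓ - 1) x ≤ (p.1 : ℕ∞)})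
      (atTop.curry l) (𝓝 (hatα ℓ)))
    (hα₁ : hatα 1 - hatα 2 ≠ 0) {k : ℕ} (hk : 1 ≤ k) :
    Tendsto (fun p : ℕ × ι => lam μ T (U p.2) k p.1) (atTop.curry l)
      (𝓝 (((hatα k - hatα (k + 1)) - (hatα (k + 1) - hatα (k + 2))) /
        (hatα 1 - hatα 2))) := by
  obtain ⟨m, rfl⟩ := Nat.exists_eq_add_of_le' hk
  have odd_window : Tendsto (Prod.map (fun L : ℕ => 2 * L + 1) (id : ι → ι))
      (atTop.curry l) (atTop.curry l) :=
    tendsto_prodMap_curry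
      (tendsto_atTop_mono (fun L => show L ≤ 2 * L + 1 by omega) tendsto_id) tendsto_id
  have mean_tendsto (r : ℕ) :
      Tendsto (fun p : ℕ × ι => meanReturnProb μ T (U p.2) r (2 * p.1 + 1)) (atTop.curry l)
        (𝓝 (hatα (r + 1) - hatα (r + 2))) :=
    ((tendsto_meanReturnProb hT.measurable hU (hlim (r + 1) r.succ_pos)
      (hlim (r + 2) (r + 1).succ_pos)).comp odd_window).congr fun _ => rfl
  have ratio_tendsto := ((mean_tendsto m).sub (mean_tendsto (m + 1))).div (mean_tendsto 0) hα₁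
  exact ratio_tendsto.congr fun p => (lam_succ_eq hT (hU p.2) (hne p.2) (hfin p.2) m p.1).symm

end DoubleLimit

theorem stmt3 {Ω : Type*} [MeasurableSpace Ω]
    (μ : Measure Ω) [IsProbabilityMeasure μ] (T : Ω → Ω)
    (hT : MeasurePreserving T μ μ)
    (U : ℕ → Set Ω) (hUmeas : ∀ n, MeasurableSet (U n))
    (hnest : ∀ n, U (n + 1) ⊆ U n)
    (hpos : ∀ n, 0 < μ (U n))
    (hto0 : Tendsto (fun n => μ (U n)) atTop (𝓝 0))
    (hatαL : ℕ → ℕ → ℝ) (hatα : ℕ → ℝ) (L₁ : ℕ)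
    (hlimL : ∀ L ≥ L₁, ∀ ℓ ≥ 1,
      Tendsto (fun n => condProb μ (U n) {x | tauIter T (U n) (ℓ - 1) x ≤ (L : ℕ∞)})
        atTop (𝓝 (hatαL ℓ L)))
    (hlim : ∀ ℓ ≥ 1, Tendsto (fun L => hatαL ℓ L) atTop (𝓝 (hatα ℓ)))
    (hsum : Summable fun ℓ : ℕ => (ℓ : ℝ) * hatα ℓ)
    (h1 : hatα 1 = 1)
    (hα1pos : 0 < 1 - hatα 2) :
    ∀ k ≥ 1, ∀ ε > (0 : ℝ), ∃ L₀ : ℕ, ∀ L ≥ L₀, ∃ N : ℕ, ∀ n ≥ N,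
      |lam μ T (U n) k L -
          ((hatα k - hatα (k + 1)) - (hatα (k + 1) - hatα (k + 2))) /
            (hatα 1 - hatα 2)| ≤ ε := by
  refine fun k hk => tendsto_curry_atTop_iff_dist_le.1 (stmt3_general hT hUmeas
    (fun n => (hpos n).ne') (fun n => measure_ne_top μ (U n)) (fun ℓ hℓ => ?_)
    (h1.symm ▸ hα1pos.ne') hk)
  exact tendsto_curry_of_tendsto_nhds
    ((eventually_ge_atTop L₁).mono fun L hL => hlimL L hL ℓ hℓ) (hlim ℓ hℓ)
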